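/- arXiv:2404.01610 — 2 statements merged into one kernel-verified Lean document; each statement's English description precedes it below -/
import Mathlib

section
/- (Uniform bound for the first flow) Let ρ > 0, let h : V → ℝ satisfy max_{x∈V} h(x) > 0, let 0 < T < +∞, and let u : V × [0,T) → ℝ be a solution of the first mean field flow ∂_t e^{u} = −Lu + ρ( h e^{u} / ∫_V h e^{u} dμ − 1/|V| ) with u(·,0) = u₀, ∫_V h e^{u₀} dμ ≠ 0, and ∫_V h e^{u(·,t)} dμ ≠ 0 for all t ∈ [0,T). Then there exists a constant C, depending only on (V, μ, W), T, ρ, h and u₀, such that ∫_V (|∇u(·,t)|² + u(·,t)²) dμ ≤ C for all t ∈ [0,T). -/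
open Real Finset

variable {V : Type*}

/-- Discrete integral: `∫_V f dμ = Σ_x μ(x) f(x)`. -/
noncomputable def intV [Fintype V] (μ f : V → ℝ) : ℝ := ∑ x, μ x * f x

/-- Volume `|V| = Σ_x μ(x)`. -/
noncomputable def volV [Fintype V] (μ : V → ℝ) : ℝ := ∑ x, μ x

/-- The nonlocal (fractional graph Laplacian type) operator
`Lu(x) = (1/μ(x)) Σ_{y ≠ x} W(x,y)(u(x) − u(y))`. -/
noncomputable def opL [Fintype V] [DecidableEq V] (μ : V → ℝ) (W : V → V → ℝ)
    (u : V → ℝ) (x : V) : ℝ :=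
  (1 / μ x) * ∑ y ∈ univ.filter (fun y => y ≠ x), W x y * (u x - u y)

/-- Gradient form `∇u·∇v(x) = (1/(2μ(x))) Σ_{y ≠ x} W(x,y)(u(x)−u(y))(v(x)−v(y))`. -/
noncomputable def gradForm [Fintype V] [DecidableEq V] (μ : V → ℝ) (W : V → V → ℝ)
    (u v : V → ℝ) (x : V) : ℝ :=
  (1 / (2 * μ x)) * ∑ y ∈ univ.filter (fun y => y ≠ x), W x y * (u x - u y) * (v x - v y)

/-- `|∇u|²(x) = ∇u·∇u(x)`. -/
noncomputable def gradSq [Fintype V] [DecidableEq V] (μ : V → ℝ) (W : V → V → ℝ)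
    (u : V → ℝ) (x : V) : ℝ := gradForm μ W u u x


section aux
variable [Fintype V] [DecidableEq V]

lemma aux_opL (μ : V → ℝ) (W : V → V → ℝ) (hμ : ∀ x, 0 < μ x) (u : V → ℝ) (x : V) :
    μ x * opL μ W u x = ∑ y, W x y * (u x - u y) := by
  unfold opL
  have h1 : ∑ y ∈ univ.filter (fun y => y ≠ x), W x y * (u x - u y)
      = ∑ y, W x y * (u x - u y) := by
    apply Finset.sum_subset (Finset.filter_subset _ _)
    intro y _ hy
    have : y = x := by simpa using hy
    simp [this]
  rw [h1]
  have := (hμ x).ne'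
  field_simp

lemma aux_grad (μ : V → ℝ) (W : V → V → ℝ) (hμ : ∀ x, 0 < μ x) (u : V → ℝ) :
    intV μ (fun x => gradSq μ W u x) = (1/2) * ∑ x, ∑ y, W x y * (u x - u y)^2 := by
  unfold intV
  rw [Finset.mul_sum]
  refine Finset.sum_congr rfl fun x _ => ?_
  unfold gradSq gradForm
  have h1 : ∑ y ∈ univ.filter (fun y => y ≠ x), W x y * (u x - u y) * (u x - u y)
      = ∑ y, W x y * (u x - u y)^2 := by
    rw [Finset.sum_subset (Finset.filter_subset (fun y => y ≠ x) univ)]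
    · exact Finset.sum_congr rfl fun y _ => by ring
    intro y _ hy
    have : y = x := by simpa using hy
    simp [this]
  beta_reduce
  rw [h1]
  have := (hμ x).ne'
  field_simp

lemma aux_sym (W : V → V → ℝ) (hWsym : ∀ x y, W x y = W y x) (u v : V → ℝ) :
    ∑ x, ∑ y, W x y * (u x - u y) * (v x - v y)
      = 2 * ∑ x, v x * ∑ y, W x y * (u x - u y) := by
  have h1 : ∑ x, ∑ y, W x y * (u x - u y) * (v x - v y)
      = ∑ x, ∑ y, W x y * (u x - u y) * v x - ∑ x, ∑ y, W x y * (u x - u y) * v y := by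
    simp only [← Finset.sum_sub_distrib, mul_sub]
  have h2 : ∑ x, ∑ y, W x y * (u x - u y) * v y
      = - ∑ x, ∑ y, W x y * (u x - u y) * v x := by
    rw [Finset.sum_comm]
    simp only [← Finset.sum_neg_distrib]
    refine Finset.sum_congr rfl fun x _ => Finset.sum_congr rfl fun y _ => ?_
    rw [hWsym y x]; ring
  rw [h1, h2]
  have h3 : ∑ x, ∑ y, W x y * (u x - u y) * v x = ∑ x, v x * ∑ y, W x y * (u x - u y) := by
    refine Finset.sum_congr rfl fun x _ => ?_
    rw [Finset.mul_sum]
    exact Finset.sum_congr rfl fun y _ => by ring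
  rw [h3]; ring

end aux

lemma aux_mono (T : ℝ) (f f' : ℝ → ℝ)
    (hf : ∀ t ∈ Set.Ico (0:ℝ) T, HasDerivAt f (f' t) t)
    (hf' : ∀ t ∈ Set.Ico (0:ℝ) T, f' t ≤ 0) :
    ∀ t ∈ Set.Ico (0:ℝ) T, f t ≤ f 0 := by
  intro t ht
  have : AntitoneOn f (Set.Ico 0 T) := by
    apply antitoneOn_of_deriv_nonpos (convex_Ico 0 T)
    · exact fun s hs => (hf s hs).continuousAt.continuousWithinAt
    · exact fun s hs => (hf s (interior_subset hs)).differentiableAt.differentiableWithinAt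
    · intro s hs
      rw [(hf s (interior_subset hs)).deriv]
      exact hf' s (interior_subset hs)
  exact this ⟨le_refl _, ht.1.trans_lt ht.2⟩ ht ht.1

/-- (Uniform bound for the first flow) Along any solution of the first mean field flow on a
finite time interval `[0,T)`, the `W^{s,2}` norm `∫_V (|∇u|² + u²) dμ` stays bounded. -/
theorem first_flow_uniform_bound [Fintype V] [Nonempty V] [DecidableEq V]
    (μ : V → ℝ) (W : V → V → ℝ)
    (hμ : ∀ x, 0 < μ x)
    (hWsym : ∀ x y, W x y = W y x)
    (hWpos : ∀ x y, x ≠ y → 0 < W x y)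
    (ρ : ℝ) (hρ : 0 < ρ)
    (h : V → ℝ) (hmax : ∃ x, 0 < h x)
    (T : ℝ) (hT : 0 < T) (u : ℝ → V → ℝ) (u₀ : V → ℝ) (hinit : u 0 = u₀)
    (hu₀ : intV μ (fun x => h x * Real.exp (u₀ x)) ≠ 0)
    (hne : ∀ t ∈ Set.Ico (0 : ℝ) T, intV μ (fun y => h y * Real.exp (u t y)) ≠ 0)
    (hflow : ∀ x, ∀ t ∈ Set.Ico (0 : ℝ) T,
      HasDerivAt (fun s => Real.exp (u s x))
        (-(opL μ W (u t) x) +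
          ρ * (h x * Real.exp (u t x) / intV μ (fun y => h y * Real.exp (u t y)) - 1 / volV μ))
        t) :
    ∃ C : ℝ, ∀ t ∈ Set.Ico (0 : ℝ) T,
      intV μ (fun x => gradSq μ W (u t) x + (u t x) ^ 2) ≤ C := by
  have hvol : 0 < volV μ := Finset.sum_pos (fun x _ => hμ x) univ_nonempty
  obtain ⟨F, hF⟩ : ∃ F : ℝ → V → ℝ, ∀ t x, F t x = -(opL μ W (u t) x) +
          ρ * (h x * Real.exp (u t x) / intV μ (fun y => h y * Real.exp (u t y)) - 1 / volV μ) :=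
    ⟨_, fun _ _ => rfl⟩
  have hE : ∀ x, ∀ t ∈ Set.Ico (0 : ℝ) T, HasDerivAt (fun s => Real.exp (u s x)) (F t x) t := by
    intro x t ht; rw [hF]; exact hflow x t ht
  have hU : ∀ x, ∀ t ∈ Set.Ico (0 : ℝ) T,
      HasDerivAt (fun s => u s x) (F t x / Real.exp (u t x)) t := by
    intro x t ht
    have := (hE x t ht).log (Real.exp_pos _).ne'
    simpa only [Real.log_exp] using this
  -- conservation of mass
  have hmF : ∀ t x, μ x * F t x = -(∑ y, W x y * (u t x - u t y)) +
      ρ * (μ x * (h x * Real.exp (u t x)) / intV μ (fun y => h y * Real.exp (u t y))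
        - μ x / volV μ) := by
    intro t x
    rw [hF, ← aux_opL μ W hμ (u t) x]; ring
  have hFsum : ∀ t ∈ Set.Ico (0 : ℝ) T, ∑ x, μ x * F t x = 0 := by
    intro t ht
    simp only [hmF, Finset.sum_add_distrib, Finset.sum_neg_distrib, ← Finset.mul_sum,
      Finset.sum_sub_distrib, ← Finset.sum_div]
    have h1 := aux_sym W hWsym (u t) (fun _ => 1)
    simp only [sub_self, mul_zero, Finset.sum_const_zero, one_mul] at h1
    have h2 : (∑ x, μ x * (h x * Real.exp (u t x))) / intV μ (fun y => h y * Real.exp (u t y)) = 1 :=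
      div_self (hne t ht)
    have h3 : (∑ x, μ x) / volV μ = 1 := div_self hvol.ne'
    rw [h2, h3]; linarith
  have hSder : ∀ t ∈ Set.Ico (0 : ℝ) T,
      HasDerivAt (fun s => ∑ x, μ x * Real.exp (u s x)) (∑ x, μ x * F t x) t := by
    intro t ht
    exact HasDerivAt.fun_sum fun x _ => (hE x t ht).const_mul (μ x)
  obtain ⟨S, hSdef⟩ : ∃ S, S = ∑ x, μ x * Real.exp (u 0 x) := ⟨_, rfl⟩
  have hS : ∀ t ∈ Set.Ico (0 : ℝ) T, ∑ x, μ x * Real.exp (u t x) = S := by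
    intro t ht
    have h1 := aux_mono T _ _ hSder (fun t ht => (hFsum t ht).le) t ht
    have h2 := aux_mono T _ _ (fun t ht => (hSder t ht).fun_neg)
      (fun t ht => by rw [hFsum t ht]; simp) t ht
    beta_reduce at h1 h2
    linarith
  have hSpos : 0 < S := by
    rw [hSdef]
    exact Finset.sum_pos (fun x _ => mul_pos (hμ x) (Real.exp_pos _)) univ_nonempty
  -- energy
  obtain ⟨J, hJ⟩ : ∃ J : ℝ → ℝ, J = fun s =>
      (1/4) * ∑ x, ∑ y, W x y * (u s x - u s y)^2 + ρ / volV μ * ∑ x, μ x * u s x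
        - ρ * Real.log (∑ x, μ x * (h x * Real.exp (u s x))) := ⟨_, rfl⟩
  have hJder : ∀ t ∈ Set.Ico (0 : ℝ) T,
      HasDerivAt J (-∑ x, μ x * F t x * (F t x / Real.exp (u t x))) t := by
    intro t ht
    have d1 : HasDerivAt (fun s => ∑ x, ∑ y, W x y * (u s x - u s y)^2)
        (∑ x, ∑ y, W x y * (((2:ℕ):ℝ) * (u t x - u t y)^(2-1) *
          (F t x / Real.exp (u t x) - F t y / Real.exp (u t y)))) t :=
      HasDerivAt.fun_sum fun x _ => HasDerivAt.fun_sum fun y _ =>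
        (((hU x t ht).fun_sub (hU y t ht)).fun_pow 2).const_mul (W x y)
    have d2 : HasDerivAt (fun s => ∑ x, μ x * u s x)
        (∑ x, μ x * (F t x / Real.exp (u t x))) t :=
      HasDerivAt.fun_sum fun x _ => (hU x t ht).const_mul (μ x)
    have d3 : HasDerivAt (fun s => ∑ x, μ x * (h x * Real.exp (u s x)))
        (∑ x, μ x * (h x * F t x)) t :=
      HasDerivAt.fun_sum fun x _ => ((hE x t ht).const_mul (h x)).const_mul (μ x)
    have d4 := d3.log (hne t ht)
    have d := ((d1.const_mul (1/4)).fun_add (d2.const_mul (ρ / volV μ))).fun_sub (d4.const_mul ρ)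
    rw [hJ]
    refine d.congr_deriv ?_
    have e1 : ∑ x, ∑ y, W x y * (((2:ℕ):ℝ) * (u t x - u t y)^(2-1) *
          (F t x / Real.exp (u t x) - F t y / Real.exp (u t y)))
        = 4 * ∑ x, (F t x / Real.exp (u t x)) * ∑ y, W x y * (u t x - u t y) := by
      have := aux_sym W hWsym (u t) (fun x => F t x / Real.exp (u t x))
      have e : (4:ℝ) = 2 * 2 := by norm_num
      rw [e, mul_assoc, ← this, Finset.mul_sum]
      refine Finset.sum_congr rfl fun x _ => ?_
      rw [Finset.mul_sum]
      refine Finset.sum_congr rfl fun y _ => ?_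
      push_cast; ring
    rw [e1]
    have e2 : ∀ x, μ x * F t x * (F t x / Real.exp (u t x)) =
        -((F t x / Real.exp (u t x)) * ∑ y, W x y * (u t x - u t y))
        + ρ / (intV μ (fun y => h y * Real.exp (u t y))) * (μ x * (h x * F t x))
        - ρ / volV μ * (μ x * (F t x / Real.exp (u t x))) := by
      intro x
      rw [hmF]
      have := (Real.exp_pos (u t x)).ne'
      have := hne t ht
      field_simp
      ring
    simp only [e2, Finset.sum_add_distrib, Finset.sum_sub_distrib, Finset.sum_neg_distrib,
      ← Finset.mul_sum]
    have e3 : (∑ x, μ x * (h x * Real.exp (u t x))) = intV μ (fun y => h y * Real.exp (u t y)) := rfl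
    rw [e3]
    ring
  have hJle := aux_mono T J _ hJder (by
    intro t ht
    rw [neg_nonpos]
    refine Finset.sum_nonneg fun x _ => ?_
    have : μ x * F t x * (F t x / Real.exp (u t x)) = μ x * (F t x)^2 / Real.exp (u t x) := by ring
    rw [this]
    exact div_nonneg (mul_nonneg (hμ x).le (sq_nonneg _)) (Real.exp_pos _).le)
  -- bound on the log term
  obtain ⟨H, hH⟩ : ∃ H, H = ∑ x, |h x| := ⟨_, rfl⟩
  have hlog : ∀ t ∈ Set.Ico (0 : ℝ) T,
      Real.log (∑ x, μ x * (h x * Real.exp (u t x))) ≤ Real.log (H * S) := by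
    intro t ht
    rw [← Real.log_abs]
    apply Real.log_le_log (abs_pos.mpr (hne t ht))
    rw [← hS t ht, Finset.mul_sum]
    refine (Finset.abs_sum_le_sum_abs _ _).trans (Finset.sum_le_sum fun x _ => ?_)
    have h1 : |h x| ≤ H := by
      rw [hH]
      exact Finset.single_le_sum (f := fun x => |h x|) (fun _ _ => abs_nonneg _) (mem_univ x)
    rw [abs_mul, abs_mul, abs_of_pos (hμ x), abs_of_pos (Real.exp_pos _)]
    have h2 : 0 < μ x * Real.exp (u t x) := mul_pos (hμ x) (Real.exp_pos _)
    nlinarith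
  obtain ⟨C1, hC1⟩ : ∃ C1, C1 = J 0 + ρ * Real.log (H * S) := ⟨_, rfl⟩
  have hen : ∀ t ∈ Set.Ico (0 : ℝ) T,
      (1/4) * ∑ x, ∑ y, W x y * (u t x - u t y)^2 + ρ / volV μ * ∑ x, μ x * u t x ≤ C1 := by
    intro t ht
    have h1 := hJle t ht
    have h2 := mul_le_mul_of_nonneg_left (hlog t ht) hρ.le
    have h3 : J t = (1/4) * ∑ x, ∑ y, W x y * (u t x - u t y)^2 + ρ / volV μ * ∑ x, μ x * u t x
        - ρ * Real.log (∑ x, μ x * (h x * Real.exp (u t x))) := by rw [hJ]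
    linarith
  -- upper bound
  obtain ⟨B, hB⟩ : ∃ B, B = ∑ x, |Real.log (S / μ x)| := ⟨_, rfl⟩
  have hup : ∀ t ∈ Set.Ico (0 : ℝ) T, ∀ x, u t x ≤ B := by
    intro t ht x
    have h1 : μ x * Real.exp (u t x) ≤ S := by
      rw [← hS t ht]
      exact Finset.single_le_sum (f := fun x => μ x * Real.exp (u t x))
        (fun y _ => (mul_pos (hμ y) (Real.exp_pos _)).le) (mem_univ x)
    have h2 : u t x ≤ Real.log (S / μ x) := by
      rw [Real.le_log_iff_exp_le (div_pos hSpos (hμ x)), le_div_iff₀ (hμ x)]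
      linarith
    have h3 : |Real.log (S / μ x)| ≤ B := by
      rw [hB]
      exact Finset.single_le_sum (f := fun x => |Real.log (S / μ x)|)
        (fun _ _ => abs_nonneg _) (mem_univ x)
    exact h2.trans ((le_abs_self _).trans h3)
  -- a point where u is not too negative
  obtain ⟨c, hc⟩ : ∃ c, c = Real.log (S / volV μ) := ⟨_, rfl⟩
  have hpt : ∀ t ∈ Set.Ico (0 : ℝ) T, ∃ x, c ≤ u t x := by
    intro t ht
    by_contra hcon
    push Not at hcon
    have h1 : ∑ x, μ x * Real.exp (u t x) < ∑ x, μ x * Real.exp c :=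
      Finset.sum_lt_sum_of_nonempty univ_nonempty fun x _ =>
        mul_lt_mul_of_pos_left (Real.exp_lt_exp.mpr (hcon x)) (hμ x)
    rw [hS t ht, ← Finset.sum_mul, hc, Real.exp_log (div_pos hSpos hvol)] at h1
    have h2 : (∑ x, μ x) * (S / volV μ) = S := mul_div_cancel₀ S hvol.ne'
    linarith
  -- lower bound of the weights
  obtain ⟨w, hw, hwW⟩ : ∃ w : ℝ, 0 < w ∧ ∀ x y, x ≠ y → w ≤ W x y := by
    obtain ⟨p, hp⟩ := Finite.exists_min (fun p : V × V => if p.1 = p.2 then (1:ℝ) else W p.1 p.2)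
    refine ⟨if p.1 = p.2 then (1:ℝ) else W p.1 p.2, ?_, ?_⟩
    · split_ifs with hh
      · exact one_pos
      · exact hWpos _ _ hh
    · intro x y hxy
      simpa [hxy] using hp (x, y)
  have hterm : ∀ t x y, 0 ≤ W x y * (u t x - u t y)^2 := by
    intro t x y
    by_cases hxy : x = y
    · simp [hxy]
    · exact mul_nonneg (hWpos x y hxy).le (sq_nonneg _)
  have hvm : ∀ t m, (∀ x, m ≤ u t x) → ρ * m ≤ ρ / volV μ * ∑ x, μ x * u t x := by
    intro t m hm
    have h1 : volV μ * m ≤ ∑ x, μ x * u t x := by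
      unfold volV
      rw [Finset.sum_mul]
      exact Finset.sum_le_sum fun x _ => mul_le_mul_of_nonneg_left (hm x) (hμ x).le
    have h2 := mul_le_mul_of_nonneg_left h1 (div_pos hρ hvol).le
    have h3 : ρ / volV μ * (volV μ * m) = ρ * m := by
      have := hvol.ne'
      field_simp
    linarith
  obtain ⟨P, hP⟩ : ∃ P, P = 1 + (4 / w) * (ρ + |C1 - ρ * c|) := ⟨_, rfl⟩
  have hA := abs_nonneg (C1 - ρ * c)
  have hP1 : 1 ≤ P := by
    rw [hP]
    have : 0 ≤ (4 / w) * (ρ + |C1 - ρ * c|) := by positivity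
    linarith
  have hlow : ∀ t ∈ Set.Ico (0 : ℝ) T, ∀ x, c - P ≤ u t x := by
    intro t ht
    obtain ⟨y, hy⟩ := Finite.exists_min (u t)
    suffices c - P ≤ u t y from fun x => this.trans (hy x)
    by_contra hcon
    push Not at hcon
    obtain ⟨x, hx⟩ := hpt t ht
    have hxy : x ≠ y := by
      rintro rfl
      linarith
    have h1 : W x y * (u t x - u t y)^2 ≤ ∑ x, ∑ y, W x y * (u t x - u t y)^2 :=
      (Finset.single_le_sum (f := fun y => W x y * (u t x - u t y)^2)
        (fun y _ => hterm t x y) (mem_univ y)).trans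
      (Finset.single_le_sum (f := fun x => ∑ y, W x y * (u t x - u t y)^2)
        (fun x _ => Finset.sum_nonneg fun y _ => hterm t x y) (mem_univ x))
    have h2 : w * (c - u t y)^2 ≤ W x y * (u t x - u t y)^2 := by
      apply mul_le_mul (hwW x y hxy) _ (sq_nonneg _) (hWpos x y hxy).le
      apply pow_le_pow_left₀ <;> linarith
    have h3 := hen t ht
    have h4 := hvm t (u t y) hy
    obtain ⟨p, hp⟩ : ∃ p, p = c - u t y := ⟨_, rfl⟩
    have h5 : u t y = c - p := by linarith
    rw [← hp] at h2
    rw [h5] at h4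
    have hpP : P < p := by linarith
    have h6 : w / 4 * p^2 ≤ C1 - ρ * c + ρ * p := by linarith
    have h7 : w + 4 * (ρ + |C1 - ρ * c|) = w * P := by
      rw [hP]; field_simp
    have h8 : w * P < w * p := mul_lt_mul_of_pos_left hpP hw
    have h9 : 4 * (ρ + |C1 - ρ * c|) < w * p := by linarith
    have h10 := le_abs_self (C1 - ρ * c)
    have h11 : 4 * (ρ + |C1 - ρ * c|) * p < w * p * p := mul_lt_mul_of_pos_right h9 (by linarith)
    nlinarith
  refine ⟨2 * (C1 - ρ * (c - P)) + volV μ * (|B| + |c - P|)^2, fun t ht => ?_⟩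
  have h1 : intV μ (fun x => gradSq μ W (u t) x + (u t x) ^ 2)
      = intV μ (fun x => gradSq μ W (u t) x) + ∑ x, μ x * (u t x)^2 := by
    unfold intV
    rw [← Finset.sum_add_distrib]
    exact Finset.sum_congr rfl fun x _ => by ring
  rw [h1, aux_grad μ W hμ]
  have h2 := hen t ht
  have h3 := hvm t (c - P) (hlow t ht)
  have h4 : ∑ x, μ x * (u t x)^2 ≤ volV μ * (|B| + |c - P|)^2 := by
    unfold volV
    rw [Finset.sum_mul]
    refine Finset.sum_le_sum fun x _ => mul_le_mul_of_nonneg_left ?_ (hμ x).le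
    apply sq_le_sq'
    · have := hlow t ht x
      have := neg_abs_le (c - P)
      have := abs_nonneg B
      linarith
    · have := hup t ht x
      have := le_abs_self B
      have := abs_nonneg (c - P)
      linarith
  linarith
end

section
/- (Global existence for the first flow) Let ρ > 0 and let h : V → ℝ change sign with max_{x∈V} h(x) > 0. For any initial function u₀ : V → ℝ with ∫_V h e^{u₀} dμ ≠ 0, there exists a unique function u : V × [0, +∞) → ℝ, differentiable in t, with ∫_V h e^{u(·,t)} dμ ≠ 0 for all t ≥ 0, such that ∂_t e^{u(x,t)} = −Lu(x,t) + ρ( h(x)e^{u(x,t)} / ∫_V h e^{u(·,t)} dμ − 1/|V| ) for all (x,t) ∈ V × (0, +∞) and u(x,0) = u₀(x) for all x ∈ V. -/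
open Real Finset

variable {V : Type*}

open Set in
lemma bounded_lipschitz_global {E : Type*} [NormedAddCommGroup E] [NormedSpace ℝ E]
    [CompleteSpace E] (X : E → E) (k : NNReal) (hX : LipschitzWith k X) (C : NNReal)
    (hC : ∀ x, ‖X x‖ ≤ C) (x₀ : E) :
    ∃ γ : ℝ → E, γ 0 = x₀ ∧ ∀ t, HasDerivAt γ (X (γ t)) t := by
  have loc : ∀ n : ℕ, ∃ γ : ℝ → E, γ 0 = x₀ ∧
      ∀ t ∈ Ioo (-(n:ℝ)) n, HasDerivAt γ (X (γ t)) t := by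
    intro n
    have h0 : (0:ℝ) ∈ Icc (-(n:ℝ)) n := by simp
    have hp : IsPicardLindelof (fun _ => X) (⟨0, h0⟩ : Icc (-(n:ℝ)) n) x₀ (C * n) 0 C k :=
      { lipschitzOnWith := fun t _ => hX.lipschitzOnWith
        continuousOn := fun x _ => continuousOn_const
        norm_le := fun t _ x _ => hC x
        mul_max_le := by simp }
    obtain ⟨γ, h1, h2⟩ := hp.exists_eq_forall_mem_Icc_hasDerivWithinAt₀
    exact ⟨γ, h1, fun t ht => (h2 t (Ioo_subset_Icc_self ht)).hasDerivAt (Icc_mem_nhds ht.1 ht.2)⟩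
  choose g g0 gd using loc
  have agree : ∀ m n : ℕ, m ≤ n → 0 < m → EqOn (g m) (g n) (Ioo (-(m:ℝ)) m) := by
    intro m n hmn hm
    have hmn' : (m:ℝ) ≤ n := by exact_mod_cast hmn
    have hm' : (0:ℝ) < m := by exact_mod_cast hm
    refine ODE_solution_unique_of_mem_Ioo (v := fun _ => X) (s := fun _ => univ) (K := k) (t₀ := 0)
      (fun t _ => hX.lipschitzOnWith) ⟨by linarith, hm'⟩
      (fun t ht => ⟨gd m t ht, mem_univ _⟩) (fun t ht => ⟨gd n t ⟨?_, ?_⟩, mem_univ _⟩) ?_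
    · linarith [ht.1]
    · linarith [ht.2]
    · rw [g0, g0]
  refine ⟨fun t => g (⌈|t|⌉₊ + 1) t, by simp [g0], fun t => ?_⟩
  set N := ⌈|t|⌉₊ + 1 with hN
  have hlt : ∀ s : ℝ, s ∈ Ioo (-((⌈|s|⌉₊ + 1 : ℕ):ℝ)) ((⌈|s|⌉₊ + 1 : ℕ):ℝ) := by
    intro s
    have := Nat.le_ceil |s|
    push_cast
    constructor <;> [linarith [neg_abs_le s]; linarith [le_abs_self s]]
  refine (gd N t (hlt t)).congr_of_eventuallyEq ?_
  filter_upwards [isOpen_Ioo.mem_nhds (hlt t)] with s hs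
  rcases le_total (⌈|s|⌉₊ + 1) N with hle | hle
  · exact agree _ _ hle (by omega) (hlt s)
  · exact (agree _ _ hle (by omega) hs).symm

open Set Filter Topology in
lemma global_flow {E : Type*} [NormedAddCommGroup E] [NormedSpace ℝ E] [FiniteDimensional ℝ E]
    (Ω K : Set E) (hΩ : IsOpen Ω) (hK : IsCompact K) (hKΩ : K ⊆ Ω) (U : E → E)
    (hU : ∀ x ∈ Ω, ContDiffAt ℝ 1 U x)
    (inv : ∀ (γ : ℝ → E) (c : ℝ → ℝ), (∀ t, 0 ≤ c t) → ∀ a b : ℝ, a ≤ b →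
      (∀ t ∈ Icc a b, HasDerivAt γ (c t • U (γ t)) t ∧ γ t ∈ Ω) → γ a ∈ K → γ b ∈ K)
    (x₀ : E) (hx₀ : x₀ ∈ K) :
    ∃ γ : ℝ → E, γ 0 = x₀ ∧ (∀ t, 0 ≤ t → γ t ∈ K ∧ HasDerivAt γ (U (γ t)) t) ∧
      ∀ β : ℝ → E, β 0 = x₀ → (∀ t, 0 ≤ t → β t ∈ Ω ∧ HasDerivAt β (U (β t)) t) →
        ∀ t, 0 ≤ t → β t = γ t := by
  obtain ⟨L, hL, hKL, hLΩ⟩ := exists_compact_between hK hΩ hKΩ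
  obtain ⟨f, hf1, hf0, hf⟩ := exists_contMDiffMap_one_nhds_of_subset_interior (n := 1)
    (modelWithCornersSelf ℝ E) hK.isClosed hKL
  have hfd : ContDiff ℝ 1 f := f.contMDiff.contDiff
  set X : E → E := fun x => f x • U x with hX
  have hXK : ∀ x ∈ K, X x = U x := by
    intro x hx
    have := (hf1.self_of_nhdsSet x hx)
    simp [hX, this]
  have hX0 : ∀ x, x ∉ L → X x = 0 := by
    intro x hx
    simp [hX, hf0 x hx]
  have hXd : ContDiff ℝ 1 X := by
    rw [contDiff_iff_contDiffAt]
    intro x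
    by_cases hx : x ∈ L
    · exact hfd.contDiffAt.smul (hU x (hLΩ hx))
    · have : X =ᶠ[𝓝 x] fun _ => 0 := by
        filter_upwards [hL.isClosed.isOpen_compl.mem_nhds hx] with y hy using hX0 y hy
      exact contDiffAt_const.congr_of_eventuallyEq this
  have hXc : HasCompactSupport X := HasCompactSupport.intro hL hX0
  obtain ⟨k, hk⟩ := hXd.lipschitzWith_of_hasCompactSupport hXc one_ne_zero
  obtain ⟨C, hC⟩ := hXc.exists_bound_of_continuous hXd.continuous
  have : CompleteSpace E := FiniteDimensional.complete ℝ E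
  obtain ⟨γ, γ0, γd⟩ := bounded_lipschitz_global X k hk C.toNNReal
    (fun x => (hC x).trans (Real.le_coe_toNNReal C)) x₀
  have γc : Continuous γ := continuous_iff_continuousAt.2 fun t => (γd t).continuousAt
  have γK : ∀ t, 0 ≤ t → γ t ∈ K := by
    intro t ht
    have hsub : Icc 0 t ⊆ γ ⁻¹' K := by
      refine IsClosed.Icc_subset_of_forall_mem_nhdsWithin
        ((hK.isClosed.preimage γc).inter isClosed_Icc) (by simpa [γ0] using hx₀) ?_
      rintro x ⟨hx, -⟩
      have hn : γ ⁻¹' Ω ∈ 𝓝 x := (hΩ.preimage γc).mem_nhds (hKΩ hx)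
      obtain ⟨ε, hε, hb⟩ := Metric.mem_nhds_iff.1 hn
      have : Ioo x (x + ε) ∈ 𝓝[>] x := Ioo_mem_nhdsGT (by linarith)
      filter_upwards [this] with b hb'
      refine inv γ (fun t => f (γ t)) (fun t => (hf _).1) x b hb'.1.le (fun s hs => ⟨γd s, ?_⟩) hx
      apply hb
      rw [Metric.mem_ball, Real.dist_eq, abs_lt]
      constructor <;> linarith [hs.1, hs.2, hb'.2]
    exact hsub ⟨ht, le_rfl⟩
  refine ⟨γ, γ0, fun t ht => ⟨γK t ht, by simpa [hXK _ (γK t ht)] using γd t⟩, ?_⟩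
  intro β β0 hβ t ht
  have βK : ∀ t, 0 ≤ t → β t ∈ K := fun t ht =>
    inv β (fun _ => 1) (fun _ => zero_le_one) 0 t ht
      (fun s hs => ⟨by simpa using (hβ s hs.1).2, (hβ s hs.1).1⟩) (by simpa [β0] using hx₀)
  refine ODE_solution_unique_of_mem_Icc_right (v := fun _ => X) (s := fun _ => univ) (K := k)
    (a := 0) (b := t) (fun t _ => hk.lipschitzOnWith)
    (HasDerivAt.continuousOn fun s hs => (hβ s hs.1).2) (fun s hs => ?_) (fun _ _ => mem_univ _)
    γc.continuousOn (fun s hs => (γd s).hasDerivWithinAt) (fun _ _ => mem_univ _) (by rw [β0, γ0])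
    ⟨ht, le_rfl⟩
  simpa [hXK _ (βK s hs.1)] using (hβ s hs.1).2.hasDerivWithinAt

/-- Right-hand side of the flow. -/
noncomputable def flowG [Fintype V] [DecidableEq V] (μ : V → ℝ) (W : V → V → ℝ) (ρ : ℝ)
    (h u : V → ℝ) (x : V) : ℝ :=
  -(opL μ W u x) +
    ρ * (h x * Real.exp (u x) / intV μ (fun y => h y * Real.exp (u y)) - 1 / volV μ)

/-- The vector field for `u`. -/
noncomputable def flowU [Fintype V] [DecidableEq V] (μ : V → ℝ) (W : V → V → ℝ) (ρ : ℝ)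
    (h u : V → ℝ) (x : V) : ℝ := Real.exp (-u x) * flowG μ W ρ h u x

/-- The energy functional. -/
noncomputable def flowJ [Fintype V] (μ : V → ℝ) (W : V → V → ℝ) (ρ : ℝ)
    (h u : V → ℝ) : ℝ :=
  1 / 4 * (∑ x, ∑ y, W x y * (u x - u y) ^ 2) + ρ / volV μ * (∑ x, μ x * u x)
    - ρ * Real.log (intV μ (fun y => h y * Real.exp (u y)))

lemma mul_opL [Fintype V] [DecidableEq V] (μ : V → ℝ) (W : V → V → ℝ)
    (hμ : ∀ x, 0 < μ x) (u : V → ℝ) (x : V) :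
    μ x * opL μ W u x = ∑ y, W x y * (u x - u y) := by
  unfold opL
  rw [← mul_assoc, mul_one_div_cancel (hμ x).ne', one_mul, Finset.sum_filter]
  refine Finset.sum_congr rfl fun y _ => ?_
  by_cases hy : y = x
  · simp [hy]
  · simp [hy]

lemma volV_pos [Fintype V] [Nonempty V] (μ : V → ℝ) (hμ : ∀ x, 0 < μ x) : 0 < volV μ :=
  Finset.sum_pos (fun x _ => hμ x) Finset.univ_nonempty

lemma sum_flowG [Fintype V] [Nonempty V] [DecidableEq V] (μ : V → ℝ) (W : V → V → ℝ)
    (hμ : ∀ x, 0 < μ x) (hWsym : ∀ x y, W x y = W y x) (ρ : ℝ) (h u : V → ℝ)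
    (hu : intV μ (fun x => h x * Real.exp (u x)) ≠ 0) :
    ∑ x, μ x * flowG μ W ρ h u x = 0 := by
  have h1 : ∑ x, μ x * opL μ W u x = 0 := by
    simp_rw [mul_opL μ W hμ]
    have : ∑ x, ∑ y, W x y * (u x - u y) = - ∑ x, ∑ y, W x y * (u x - u y) := by
      conv_lhs => rw [Finset.sum_comm]
      rw [← Finset.sum_neg_distrib]
      refine Finset.sum_congr rfl fun x _ => ?_
      rw [← Finset.sum_neg_distrib]
      refine Finset.sum_congr rfl fun y _ => ?_
      rw [hWsym y x]; ring
    linarith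
  have h2 : ∑ x, μ x * (h x * Real.exp (u x) / intV μ (fun y => h y * Real.exp (u y))) = 1 := by
    simp_rw [← mul_div_assoc]
    rw [← Finset.sum_div]
    exact div_self hu
  have h3 : ∑ x, μ x * (1 / volV μ) = 1 := by
    rw [← Finset.sum_mul]
    exact mul_one_div_cancel (volV_pos μ hμ).ne'
  have : ∀ x, μ x * flowG μ W ρ h u x = -(μ x * opL μ W u x) +
      ρ * (μ x * (h x * Real.exp (u x) / intV μ (fun y => h y * Real.exp (u y)))
        - μ x * (1 / volV μ)) := by
    intro x; unfold flowG; ring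
  simp_rw [this]
  rw [Finset.sum_add_distrib, Finset.sum_neg_distrib, ← Finset.mul_sum, Finset.sum_sub_distrib,
    h1, h2, h3]
  ring

lemma hasDerivAt_mass [Fintype V] [Nonempty V] [DecidableEq V] (μ : V → ℝ) (W : V → V → ℝ)
    (hμ : ∀ x, 0 < μ x) (hWsym : ∀ x y, W x y = W y x) (ρ : ℝ) (h : V → ℝ)
    (γ : ℝ → V → ℝ) (c t : ℝ) (hγ : HasDerivAt γ (c • flowU μ W ρ h (γ t)) t)
    (hu : intV μ (fun x => h x * Real.exp (γ t x)) ≠ 0) :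
    HasDerivAt (fun s => ∑ x, μ x * Real.exp (γ s x)) 0 t := by
  have hx := hasDerivAt_pi.1 hγ
  have h1 : HasDerivAt (fun s => ∑ x, μ x * Real.exp (γ s x))
      (∑ x, μ x * (Real.exp (γ t x) * (c • flowU μ W ρ h (γ t)) x)) t :=
    HasDerivAt.fun_sum fun x _ => ((hx x).exp).const_mul (μ x)
  convert h1 using 1
  have : ∀ x, μ x * (Real.exp (γ t x) * (c • flowU μ W ρ h (γ t)) x)
      = c * (μ x * flowG μ W ρ h (γ t) x) := by
    intro x
    have e : Real.exp (γ t x) * Real.exp (-γ t x) = 1 := by rw [← Real.exp_add]; simp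
    simp only [Pi.smul_apply, smul_eq_mul, flowU]
    linear_combination (μ x * c * flowG μ W ρ h (γ t) x) * e
  simp_rw [this]
  rw [← Finset.mul_sum, sum_flowG μ W hμ hWsym ρ h _ hu, mul_zero]

lemma hasDerivAt_energy [Fintype V] [Nonempty V] [DecidableEq V] (μ : V → ℝ) (W : V → V → ℝ)
    (hμ : ∀ x, 0 < μ x) (hWsym : ∀ x y, W x y = W y x) (ρ : ℝ) (h : V → ℝ)
    (γ : ℝ → V → ℝ) (c t : ℝ) (hc : 0 ≤ c) (hγ : HasDerivAt γ (c • flowU μ W ρ h (γ t)) t)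
    (hu : intV μ (fun x => h x * Real.exp (γ t x)) ≠ 0) :
    ∃ d ≤ 0, HasDerivAt (fun s => flowJ μ W ρ h (γ s)) d t := by
  have hx := hasDerivAt_pi.1 hγ
  set d : V → ℝ := c • flowU μ W ρ h (γ t) with hd
  set u := γ t with hut
  have h1 : HasDerivAt (fun s => ∑ x, ∑ y, W x y * (γ s x - γ s y) ^ 2)
      (∑ x, ∑ y, W x y * (2 * (u x - u y) * (d x - d y))) t := by
    refine HasDerivAt.fun_sum fun x _ => HasDerivAt.fun_sum fun y _ => ?_
    have := (((hx x).fun_sub (hx y)).fun_pow 2).const_mul (W x y)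
    simpa using this
  have h2 : HasDerivAt (fun s => ∑ x, μ x * γ s x) (∑ x, μ x * d x) t :=
    HasDerivAt.fun_sum fun x _ => (hx x).const_mul (μ x)
  have h3 : HasDerivAt (fun s => intV μ (fun y => h y * Real.exp (γ s y)))
      (∑ x, μ x * (h x * (Real.exp (u x) * d x))) t := by
    unfold intV
    exact HasDerivAt.fun_sum fun x _ => (((hx x).exp).const_mul (h x)).const_mul (μ x)
  have h4 := ((h1.const_mul (1 / 4)).add (h2.const_mul (ρ / volV μ))).sub ((h3.log hu).const_mul ρ)
  refine ⟨_, ?_, h4⟩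
  set H := intV μ (fun y => h y * Real.exp (u y)) with hH
  have e1 : ∑ x, ∑ y, W x y * (2 * (u x - u y) * (d x - d y))
      = 4 * ∑ x, (μ x * opL μ W u x) * d x := by
    simp_rw [mul_opL μ W hμ, Finset.sum_mul]
    have s1 : ∑ x, ∑ y, W x y * (u x - u y) * d y = - ∑ x, ∑ y, W x y * (u x - u y) * d x := by
      rw [Finset.sum_comm, ← Finset.sum_neg_distrib]
      refine Finset.sum_congr rfl fun x _ => ?_
      rw [← Finset.sum_neg_distrib]
      refine Finset.sum_congr rfl fun y _ => ?_
      rw [hWsym y x]; ring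
    have s2 : ∑ x, ∑ y, W x y * (2 * (u x - u y) * (d x - d y))
        = 2 * ∑ x, ∑ y, W x y * (u x - u y) * d x - 2 * ∑ x, ∑ y, W x y * (u x - u y) * d y := by
      simp_rw [Finset.mul_sum]
      rw [← Finset.sum_sub_distrib]
      refine Finset.sum_congr rfl fun x _ => ?_
      rw [← Finset.sum_sub_distrib]
      refine Finset.sum_congr rfl fun y _ => ?_
      ring
    rw [s2, s1]; ring
  have e2 : 1 / 4 * ∑ x, ∑ y, W x y * (2 * (u x - u y) * (d x - d y)) +
      ρ / volV μ * ∑ x, μ x * d x - ρ * ((∑ x, μ x * (h x * (Real.exp (u x) * d x))) / H)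
      = - ∑ x, c * (μ x * Real.exp (-u x) * flowG μ W ρ h u x ^ 2) := by
    rw [e1, Finset.sum_div, Finset.mul_sum, Finset.mul_sum, Finset.mul_sum, Finset.mul_sum,
      ← Finset.sum_add_distrib, ← Finset.sum_sub_distrib, ← Finset.sum_neg_distrib]
    refine Finset.sum_congr rfl fun x _ => ?_
    have : d x = c * (Real.exp (-u x) * flowG μ W ρ h u x) := by
      simp [hd, flowU]
    have g : flowG μ W ρ h u x = -(opL μ W u x) + ρ * (h x * Real.exp (u x) / H - 1 / volV μ) := rfl
    have : c * (μ x * Real.exp (-u x) * flowG μ W ρ h u x ^ 2) =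
        μ x * d x * flowG μ W ρ h u x := by rw [this]; ring
    rw [this, g]; ring
  rw [e2]
  refine neg_nonpos.2 (Finset.sum_nonneg fun x _ => ?_)
  have := (hμ x).le
  positivity

lemma flow_bounds [Fintype V] [Nonempty V] [DecidableEq V] (μ : V → ℝ) (W : V → V → ℝ)
    (hμ : ∀ x, 0 < μ x) (hWsym : ∀ x y, W x y = W y x)
    (hWpos : ∀ x y, x ≠ y → 0 < W x y) (ρ : ℝ) (hρ : 0 < ρ) (h : V → ℝ) (M J₀ : ℝ) (hM : 0 < M) :
    ∃ R δ : ℝ, 0 < δ ∧ ∀ u : V → ℝ, intV μ (fun x => h x * Real.exp (u x)) ≠ 0 →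
      ∑ x, μ x * Real.exp (u x) = M → flowJ μ W ρ h u ≤ J₀ →
      (∀ x, |u x| ≤ R) ∧ δ ≤ |intV μ (fun x => h x * Real.exp (u x))| := by
  obtain ⟨w, hw, hwW⟩ : ∃ w : ℝ, 0 < w ∧ ∀ x y, x ≠ y → w ≤ W x y := by
    by_cases hne : (Finset.univ.filter (fun p : V × V => p.1 ≠ p.2)).Nonempty
    · obtain ⟨p, hp, hmin⟩ := Finset.exists_min_image _ (fun p : V × V => W p.1 p.2) hne
      refine ⟨W p.1 p.2, hWpos _ _ (by simpa using hp), fun x y hxy => hmin (x, y) (by simpa using hxy)⟩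
    · refine ⟨1, one_pos, fun x y hxy => (hne ⟨(x, y), by simpa using hxy⟩).elim⟩
  obtain ⟨z, -, hz⟩ := Finset.exists_min_image Finset.univ μ Finset.univ_nonempty
  have hvol := volV_pos μ hμ
  set c := Real.log (M / volV μ) with hc
  set B := Real.log (M / μ z) with hB
  set C1 := Real.log ((∑ x, |h x|) * M) with hC1
  set A := J₀ - ρ * c + ρ * C1 with hA
  set D := 4 * (ρ + |A|) / w + 1 with hD
  refine ⟨|B| + |c - D|, Real.exp (c - D - J₀ / ρ), Real.exp_pos _, ?_⟩
  intro u hu hm hJ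
  obtain ⟨p, -, hp⟩ := Finset.exists_max_image Finset.univ u Finset.univ_nonempty
  obtain ⟨q, -, hq⟩ := Finset.exists_min_image Finset.univ u Finset.univ_nonempty
  set d := u p - u q with hd
  have hd0 : 0 ≤ d := sub_nonneg.2 (hp q (Finset.mem_univ _))
  -- upper bound
  have hub : ∀ x, u x ≤ B := by
    intro x
    rw [hB, Real.le_log_iff_exp_le (div_pos hM (hμ z)), le_div_iff₀ (hμ z)]
    calc Real.exp (u x) * μ z ≤ μ x * Real.exp (u x) := by
          rw [mul_comm]
          exact mul_le_mul_of_nonneg_right (hz x (Finset.mem_univ _)) (Real.exp_pos _).le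
      _ ≤ ∑ x, μ x * Real.exp (u x) :=
          Finset.single_le_sum (f := fun x => μ x * Real.exp (u x))
            (fun y _ => mul_nonneg (hμ y).le (Real.exp_pos _).le) (Finset.mem_univ x)
      _ = M := hm
  have hpc : c ≤ u p := by
    rw [hc, Real.log_le_iff_le_exp (div_pos hM hvol), div_le_iff₀ hvol, ← hm, volV,
      Finset.mul_sum]
    refine Finset.sum_le_sum fun x _ => ?_
    rw [mul_comm]
    exact mul_le_mul_of_nonneg_right (Real.exp_le_exp.2 (hp x (Finset.mem_univ _))) (hμ x).le
  set H := intV μ (fun x => h x * Real.exp (u x)) with hH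
  have hHle : |H| ≤ (∑ x, |h x|) * M := by
    rw [hH, ← hm, intV, Finset.mul_sum]
    refine (Finset.abs_sum_le_sum_abs _ _).trans (Finset.sum_le_sum fun x _ => ?_)
    rw [abs_mul, abs_mul, abs_of_pos (hμ x), abs_of_pos (Real.exp_pos _)]
    have h1 : |h x| ≤ ∑ y, |h y| :=
      Finset.single_le_sum (f := fun y => |h y|) (fun y _ => abs_nonneg _) (Finset.mem_univ x)
    have h2 : 0 ≤ μ x * Real.exp (u x) := mul_nonneg (hμ x).le (Real.exp_pos _).le
    nlinarith [mul_le_mul_of_nonneg_right h1 h2]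
  have hlog : Real.log H ≤ C1 := by
    rw [← Real.log_abs]
    exact Real.log_le_log (abs_pos.2 hu) hHle
  have hgrad : w * d ^ 2 ≤ ∑ x, ∑ y, W x y * (u x - u y) ^ 2 := by
    have nn : ∀ x y, 0 ≤ W x y * (u x - u y) ^ 2 := by
      intro x y
      by_cases hxy : x = y
      · simp [hxy]
      · exact mul_nonneg (hWpos x y hxy).le (sq_nonneg _)
    have : w * d ^ 2 ≤ W p q * (u p - u q) ^ 2 := by
      by_cases hxy : p = q
      · simp [hd, hxy]
      · exact mul_le_mul_of_nonneg_right (hwW p q hxy) (sq_nonneg _)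
    refine this.trans ?_
    refine (Finset.single_le_sum (f := fun y => W p y * (u p - u y) ^ 2)
      (fun y _ => nn p y) (Finset.mem_univ q)).trans ?_
    exact Finset.single_le_sum (f := fun x => ∑ y, W x y * (u x - u y) ^ 2)
      (fun x _ => Finset.sum_nonneg fun y _ => nn x y) (Finset.mem_univ p)
  have hmean : ρ * (c - d) ≤ ρ / volV μ * (∑ x, μ x * u x) := by
    rw [div_mul_eq_mul_div, le_div_iff₀ hvol, mul_assoc]
    refine mul_le_mul_of_nonneg_left ?_ hρ.le
    rw [volV, Finset.mul_sum]
    refine Finset.sum_le_sum fun x _ => ?_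
    rw [mul_comm]
    refine mul_le_mul_of_nonneg_left ?_ (hμ x).le
    have := hq x (Finset.mem_univ _)
    linarith
  have hJ' : 1 / 4 * (∑ x, ∑ y, W x y * (u x - u y) ^ 2) + ρ / volV μ * (∑ x, μ x * u x)
    - ρ * Real.log H ≤ J₀ := hJ
  have hdD : d ≤ D := by
    by_contra hcon
    push Not at hcon
    have k1 : w * d ^ 2 / 4 - ρ * d ≤ A := by
      have := mul_le_mul_of_nonneg_left hlog hρ.le
      rw [hA]; linarith
    have hD1 : 1 ≤ D := by
      rw [hD]; have : 0 ≤ 4 * (ρ + |A|) / w := by positivity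
      linarith
    have k2 : 4 * (ρ + |A|) < w * d := by
      have : 4 * (ρ + |A|) / w < d := by linarith
      rw [div_lt_iff₀ hw] at this
      linarith
    have k3 := le_abs_self A
    have k4 := abs_nonneg A
    nlinarith
  have hlb : ∀ x, c - D ≤ u x := by
    intro x
    have := hq x (Finset.mem_univ _)
    linarith
  refine ⟨fun x => ?_, ?_⟩
  · rw [abs_le]
    constructor
    · linarith [hlb x, neg_abs_le (c - D), abs_nonneg B]
    · linarith [hub x, le_abs_self B, abs_nonneg (c - D)]
  · rw [← Real.le_log_iff_exp_le (abs_pos.2 hu), Real.log_abs]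
    have k1 : ρ * (c - d) - ρ * Real.log H ≤ J₀ := by
      have : 0 ≤ w * d ^ 2 := by positivity
      linarith
    have k2 : ρ * (c - D - J₀ / ρ) = ρ * (c - D) - J₀ := by field_simp
    refine le_of_mul_le_mul_left ?_ hρ
    rw [k2]
    have := mul_le_mul_of_nonneg_left hdD hρ.le
    linarith

lemma contDiff_intV [Fintype V] (μ h : V → ℝ) :
    ContDiff ℝ 1 (fun u : V → ℝ => intV μ (fun x => h x * Real.exp (u x))) := by
  unfold intV
  fun_prop

lemma contDiffAt_flowU [Fintype V] [DecidableEq V] (μ : V → ℝ) (W : V → V → ℝ) (ρ : ℝ)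
    (h u : V → ℝ) (hu : intV μ (fun x => h x * Real.exp (u x)) ≠ 0) :
    ContDiffAt ℝ 1 (flowU μ W ρ h) u := by
  rw [contDiffAt_pi]
  intro x
  unfold flowU flowG
  have h1 : ContDiffAt ℝ 1 (fun u : V → ℝ => intV μ (fun x => h x * Real.exp (u x))) u :=
    (contDiff_intV μ h).contDiffAt
  have h2 : ContDiff ℝ 1 (fun u : V → ℝ => opL μ W u x) := by
    unfold opL; fun_prop
  have h3 : ContDiff ℝ 1 (fun u : V → ℝ => Real.exp (-u x)) := by fun_prop
  have h4 : ContDiff ℝ 1 (fun u : V → ℝ => h x * Real.exp (u x)) := by fun_prop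
  exact h3.contDiffAt.mul (h2.contDiffAt.neg.add
    (contDiffAt_const.mul ((h4.contDiffAt.div h1 hu).sub contDiffAt_const)))

lemma isCompact_flowK [Fintype V] [Nonempty V] [DecidableEq V] (μ : V → ℝ) (W : V → V → ℝ)
    (hμ : ∀ x, 0 < μ x) (hWsym : ∀ x y, W x y = W y x)
    (hWpos : ∀ x y, x ≠ y → 0 < W x y) (ρ : ℝ) (hρ : 0 < ρ) (h : V → ℝ) (M J₀ : ℝ) (hM : 0 < M) :
    IsCompact {u : V → ℝ | intV μ (fun x => h x * Real.exp (u x)) ≠ 0 ∧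
      ∑ x, μ x * Real.exp (u x) = M ∧ flowJ μ W ρ h u ≤ J₀} := by
  obtain ⟨R, δ, hδ, hb⟩ := flow_bounds μ W hμ hWsym hWpos ρ hρ h M J₀ hM
  have hH := (contDiff_intV μ h).continuous
  have hS : IsClosed {u : V → ℝ | δ ≤ |intV μ (fun x => h x * Real.exp (u x))|} :=
    isClosed_le continuous_const hH.abs
  have hJ : ContinuousOn (flowJ μ W ρ h)
      {u : V → ℝ | δ ≤ |intV μ (fun x => h x * Real.exp (u x))|} := by
    unfold flowJ
    refine ContinuousOn.sub (Continuous.continuousOn (by fun_prop)) (continuousOn_const.mul ?_)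
    exact hH.continuousOn.log fun u hu => abs_pos.1 (hδ.trans_le hu)
  have hclosed := hJ.preimage_isClosed_of_isClosed hS (isClosed_Iic (a := J₀))
  have hmc : IsClosed {u : V → ℝ | ∑ x, μ x * Real.exp (u x) = M} :=
    isClosed_eq (by fun_prop) continuous_const
  have heq : {u : V → ℝ | intV μ (fun x => h x * Real.exp (u x)) ≠ 0 ∧
      ∑ x, μ x * Real.exp (u x) = M ∧ flowJ μ W ρ h u ≤ J₀} =
      ({u : V → ℝ | δ ≤ |intV μ (fun x => h x * Real.exp (u x))|} ∩
        flowJ μ W ρ h ⁻¹' Set.Iic J₀) ∩ {u : V → ℝ | ∑ x, μ x * Real.exp (u x) = M} := by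
    ext u
    constructor
    · rintro ⟨h1, h2, h3⟩
      exact ⟨⟨(hb u h1 h2 h3).2, h3⟩, h2⟩
    · rintro ⟨⟨h1, h3⟩, h2⟩
      exact ⟨abs_pos.1 (hδ.trans_le h1), h2, h3⟩
  refine Metric.isCompact_of_isClosed_isBounded (heq ▸ hclosed.inter hmc) ?_
  refine (Metric.isBounded_closedBall (x := (0 : V → ℝ)) (r := R)).subset ?_
  rintro u ⟨h1, h2, h3⟩
  have := (hb u h1 h2 h3).1
  have hR : 0 ≤ R := (abs_nonneg _).trans (this (Classical.arbitrary V))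
  rw [mem_closedBall_zero_iff, pi_norm_le_iff_of_nonneg hR]
  exact this

/-- (Global existence for the first flow) For `ρ > 0`, sign-changing `h` with `max h > 0`,
and initial datum with `∫_V h e^{u₀} dμ ≠ 0`, the first mean field flow has a unique global
solution on `[0, +∞)`. -/
theorem first_flow_global [Fintype V] [Nonempty V] [DecidableEq V]
    (μ : V → ℝ) (W : V → V → ℝ)
    (hμ : ∀ x, 0 < μ x)
    (hWsym : ∀ x y, W x y = W y x)
    (hWpos : ∀ x y, x ≠ y → 0 < W x y)
    (ρ : ℝ) (hρ : 0 < ρ)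
    (h : V → ℝ) (hpos : ∃ x, 0 < h x) (hneg : ∃ x, h x < 0)
    (u₀ : V → ℝ) (hu₀ : intV μ (fun x => h x * Real.exp (u₀ x)) ≠ 0) :
    ∃ u : ℝ → V → ℝ,
      (u 0 = u₀) ∧
      (∀ t ∈ Set.Ici (0 : ℝ), intV μ (fun y => h y * Real.exp (u t y)) ≠ 0) ∧
      (∀ x, ∀ t ∈ Set.Ici (0 : ℝ),
        HasDerivAt (fun s => Real.exp (u s x))
          (-(opL μ W (u t) x) +
            ρ * (h x * Real.exp (u t x) / intV μ (fun y => h y * Real.exp (u t y)) - 1 / volV μ))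
          t) ∧
      (∀ v : ℝ → V → ℝ, v 0 = u₀ →
        (∀ t ∈ Set.Ici (0 : ℝ), intV μ (fun y => h y * Real.exp (v t y)) ≠ 0) →
        (∀ x, ∀ t ∈ Set.Ici (0 : ℝ),
          HasDerivAt (fun s => Real.exp (v s x))
            (-(opL μ W (v t) x) +
              ρ * (h x * Real.exp (v t x) / intV μ (fun y => h y * Real.exp (v t y)) - 1 / volV μ))
            t) →
        ∀ t ∈ Set.Ici (0 : ℝ), v t = u t) := by
  set M := ∑ x, μ x * Real.exp (u₀ x) with hM
  have hMpos : 0 < M :=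
    Finset.sum_pos (fun x _ => mul_pos (hμ x) (Real.exp_pos _)) Finset.univ_nonempty
  obtain ⟨γ, γ0, hγ, huniq⟩ := global_flow
    {u : V → ℝ | intV μ (fun x => h x * Real.exp (u x)) ≠ 0}
    {u : V → ℝ | intV μ (fun x => h x * Real.exp (u x)) ≠ 0 ∧
      ∑ x, μ x * Real.exp (u x) = M ∧ flowJ μ W ρ h u ≤ flowJ μ W ρ h u₀}
    (isOpen_ne_fun (contDiff_intV μ h).continuous continuous_const)
    (isCompact_flowK μ W hμ hWsym hWpos ρ hρ h M _ hMpos)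
    (fun u hu => hu.1) (flowU μ W ρ h) (fun u hu => contDiffAt_flowU μ W ρ h u hu)
    (by
      rintro γ c hc a b hab hd ⟨-, hm, hJ⟩
      have d1 : ∀ t ∈ Set.Icc a b, HasDerivAt (fun s => ∑ x, μ x * Real.exp (γ s x)) 0 t :=
        fun t ht => hasDerivAt_mass μ W hμ hWsym ρ h γ (c t) t (hd t ht).1 (hd t ht).2
      have d2 : ∀ t ∈ Set.Icc a b, ∃ d ≤ 0, HasDerivAt (fun s => flowJ μ W ρ h (γ s)) d t :=
        fun t ht => hasDerivAt_energy μ W hμ hWsym ρ h γ (c t) t (hc t) (hd t ht).1 (hd t ht).2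
      refine ⟨(hd b ⟨hab, le_rfl⟩).2, ?_, ?_⟩
      · rw [← hm]
        exact constant_of_has_deriv_right_zero (HasDerivAt.continuousOn d1)
          (fun t ht => (d1 t ⟨ht.1, ht.2.le⟩).hasDerivWithinAt) b ⟨hab, le_rfl⟩
      · refine le_trans ?_ hJ
        have : AntitoneOn (fun s => flowJ μ W ρ h (γ s)) (Set.Icc a b) := by
          refine antitoneOn_of_deriv_nonpos (convex_Icc a b) ?_ ?_ ?_
          · intro t ht
            obtain ⟨d, -, h2⟩ := d2 t ht
            exact h2.continuousAt.continuousWithinAt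
          · intro t ht
            obtain ⟨d, -, h2⟩ := d2 t (interior_subset ht)
            exact h2.differentiableAt.differentiableWithinAt
          · intro t ht
            obtain ⟨d, h1, h2⟩ := d2 t (interior_subset ht)
            rw [h2.deriv]; exact h1
        exact this ⟨le_rfl, hab⟩ ⟨hab, le_rfl⟩ hab)
    u₀ ⟨hu₀, rfl, le_rfl⟩
  refine ⟨γ, γ0, fun t ht => (hγ t ht).1.1, ?_, ?_⟩
  · intro x t ht
    have h1 := (hasDerivAt_pi.1 (hγ t ht).2 x).exp
    convert h1 using 1
    have e : Real.exp (γ t x) * Real.exp (-γ t x) = 1 := by rw [← Real.exp_add]; simp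
    change flowG μ W ρ h (γ t) x = _
    unfold flowU
    rw [← mul_assoc, e, one_mul]
  · intro v v0 hv hvd t ht
    refine huniq v v0 (fun s hs => ⟨hv s hs, hasDerivAt_pi.2 fun x => ?_⟩) t ht
    have h1 := (hvd x s hs).log (Real.exp_pos _).ne'
    simp only [Real.log_exp] at h1
    have key : flowU μ W ρ h (v s) x = flowG μ W ρ h (v s) x / Real.exp (v s x) := by
      unfold flowU
      rw [Real.exp_neg]; ring
    rw [key]
    exact h1
end
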